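/- Let μ₁ be the measure on ℝ given by dμ₁(x)=φ₁(x)dx with φ₁:ℝ→[0,∞) positively decreasing, and let μ₂ be the measure on ℝ^{n−1} given by dμ₂(x)=φ₂(x)dx with φ₂:ℝ^{n−1}→[0,∞) a q-concave function for some −1/(n−1) ≤ q ≤ ∞. Let μ = μ₁×μ₂ on ℝⁿ = ℝ×ℝ^{n−1}. Let λ∈(0,1) and let A,B⊆ℝⁿ be non-empty measurable sets such that (1−λ)A+λB is also measurable and μ₂(A(0)) = sup_{x∈ℝ} μ₂(A(x)) = sup_{x∈ℝ} μ₂(B(x)) = μ₂(B(0)). Then μ((1−λ)A+λB) ≥ (1−λ)μ(A) + λμ(B). -/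

import Mathlib

open MeasureTheory Set Metric Filter
open scoped ENNReal NNReal Topology Pointwise

noncomputable section

/-- The `d`-convex combination `(1-λ)A ⋆_d λB` of two sets. -/
def starComb {Z : Type*} (d : Z → Z → ℝ) (lam : ℝ) (A B : Set Z) : Set Z :=
  {z | ∃ a ∈ A, ∃ b ∈ B, d z a = lam * d a b ∧ d z b = (1 - lam) * d a b}

/-- A distance is strictly intrinsic: closed balls of radii summing to the distance
between their centers intersect. -/
def StrictlyIntrinsicDist {Z : Type*} (d : Z → Z → ℝ) : Prop :=
  ∀ x y : Z, ∀ r₁ r₂ : ℝ, 0 ≤ r₁ → 0 ≤ r₂ → r₁ + r₂ = d x y →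
    ∃ z : Z, d z x ≤ r₁ ∧ d z y ≤ r₂

/-- The ℓ² (Euclidean) product metric on `X × Y`. -/
def rho {X Y : Type*} [PseudoMetricSpace X] [PseudoMetricSpace Y] (a b : X × Y) : ℝ :=
  Real.sqrt (dist a.1 b.1 ^ 2 + dist a.2 b.2 ^ 2)

/-- The ℓ² (Euclidean) metric on a finite product of copies of a metric space. -/
def rhoPi {ι : Type*} [Fintype ι] {X : Type*} [PseudoMetricSpace X] (a b : ι → X) : ℝ :=
  Real.sqrt (∑ i, dist (a i) (b i) ^ 2)

open Classical in
/-- The `p`-th mean `M_p(a,b,λ)` of `a, b ∈ [0,∞]`, for `p ∈ ℝ ∪ {±∞}`, with the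
convention that it vanishes whenever `a * b = 0`. -/
def Mp (p : EReal) (lam : ℝ) (a b : ℝ≥0∞) : ℝ≥0∞ :=
  if a = 0 ∨ b = 0 then 0
  else if p = ⊤ then max a b
  else if p = ⊥ then min a b
  else if p = 0 then a ^ (1 - lam) * b ^ lam
  else (ENNReal.ofReal (1 - lam) * a ^ p.toReal + ENNReal.ofReal lam * b ^ p.toReal) ^ (1 / p.toReal)

open Classical in
/-- The `p`-th mean `M_p(a,b,λ)` of nonnegative reals, with the zero convention. -/
def MpR (p : EReal) (lam a b : ℝ) : ℝ :=
  if a = 0 ∨ b = 0 then 0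
  else if p = ⊤ then max a b
  else if p = ⊥ then min a b
  else if p = 0 then a ^ (1 - lam) * b ^ lam
  else ((1 - lam) * a ^ p.toReal + lam * b ^ p.toReal) ^ (1 / p.toReal)

/-- `(X,d,μ)` satisfies `BM(p)`. -/
def SatisfiesBM {X : Type*} [MeasurableSpace X] (d : X → X → ℝ) (μ : Measure X)
    (p : EReal) : Prop :=
  ∀ lam : ℝ, lam ∈ Ioo (0:ℝ) 1 → ∀ A B C : Set X, A.Nonempty → B.Nonempty →
    MeasurableSet A → MeasurableSet B → MeasurableSet C →
    μ A ≠ 0 → μ B ≠ 0 → starComb d lam A B ⊆ C →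
    Mp p lam (μ A) (μ B) ≤ μ C

/-- `(X,d,μ)` satisfies the general (linear) inequality `B̄M(1)`:
`μ(C) ≥ (1-λ)μ(A) + λμ(B)` for all nonempty measurable `A, B, C` with
`C ⊇ (1-λ)A ⋆ λB`. -/
def SatisfiesBMbarLinear {X : Type*} [MeasurableSpace X] (d : X → X → ℝ)
    (μ : Measure X) : Prop :=
  ∀ lam : ℝ, lam ∈ Ioo (0:ℝ) 1 → ∀ A B C : Set X, A.Nonempty → B.Nonempty →
    MeasurableSet A → MeasurableSet B → MeasurableSet C →
    starComb d lam A B ⊆ C →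
    ENNReal.ofReal (1 - lam) * μ A + ENNReal.ofReal lam * μ B ≤ μ C

/-- `(X,d,μ)` satisfies the general inequality `B̄M(p)` for a real `p > 0`:
`μ(C) ≥ ((1-λ)μ(A)^p + λμ(B)^p)^{1/p}` for all nonempty measurable `A, B, C`
with `C ⊇ (1-λ)A ⋆ λB`. -/
def SatisfiesBMbarPos {X : Type*} [MeasurableSpace X] (d : X → X → ℝ) (μ : Measure X)
    (p : ℝ) : Prop :=
  ∀ lam : ℝ, lam ∈ Ioo (0:ℝ) 1 → ∀ A B C : Set X, A.Nonempty → B.Nonempty →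
    MeasurableSet A → MeasurableSet B → MeasurableSet C →
    starComb d lam A B ⊆ C →
    (ENNReal.ofReal (1 - lam) * μ A ^ p + ENNReal.ofReal lam * μ B ^ p) ^ (1/p) ≤ μ C

/-- `(X,d,μ)` satisfies the weighted inequality `BM(p,q)`:
`μ(C)^p ≥ (1-λ)^q μ(A)^p + λ^q μ(B)^p` for all nonempty measurable sets of positive
measure with `C ⊇ (1-λ)A ⋆ λB`. -/
def SatisfiesBMW {X : Type*} [MeasurableSpace X] (d : X → X → ℝ) (μ : Measure X)
    (p q : ℝ) : Prop :=
  ∀ lam : ℝ, lam ∈ Ioo (0:ℝ) 1 → ∀ A B C : Set X, A.Nonempty → B.Nonempty →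
    MeasurableSet A → MeasurableSet B → MeasurableSet C →
    μ A ≠ 0 → μ B ≠ 0 → starComb d lam A B ⊆ C →
    ENNReal.ofReal ((1 - lam) ^ q) * μ A ^ p + ENNReal.ofReal (lam ^ q) * μ B ^ p ≤ μ C ^ p

/-- `(X,d,μ)` satisfies the Prékopa–Leindler inequality `PL`. -/
def SatisfiesPL {X : Type*} [MeasurableSpace X] (d : X → X → ℝ) (μ : Measure X) : Prop :=
  ∀ lam : ℝ, lam ∈ Ioo (0:ℝ) 1 → ∀ f g h : X → ℝ≥0∞,
    Measurable f → Measurable g → Measurable h →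
    (∀ x y z : X, d z x = lam * d x y → d z y = (1 - lam) * d x y →
      f x ^ (1 - lam) * g y ^ lam ≤ h z) →
    (∫⁻ x, f x ∂μ) ^ (1 - lam) * (∫⁻ x, g x ∂μ) ^ lam ≤ ∫⁻ x, h x ∂μ

open Classical in
/-- `(X,d,μ)` satisfies the Borell–Brascamp–Lieb inequality `BBL(p,m)`. -/
def SatisfiesBBL {X : Type*} [MeasurableSpace X] (d : X → X → ℝ) (μ : Measure X)
    (p m : ℝ) : Prop :=
  ∀ lam : ℝ, lam ∈ Ioo (0:ℝ) 1 → ∀ f g h : X → ℝ≥0∞,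
    Measurable f → Measurable g → Measurable h →
    (∀ x y z : X, d z x = lam * d x y → d z y = (1 - lam) * d x y →
      Mp (p : EReal) lam (f x) (g y) ≤ h z) →
    Mp (if m * p + 1 = 0 then (⊥ : EReal) else ((p / (m * p + 1) : ℝ) : EReal)) lam
      (∫⁻ x, f x ∂μ) (∫⁻ x, g x ∂μ) ≤ ∫⁻ x, h x ∂μ

/-- `φ : ℝ → ℝ` is positively decreasing: `t ↦ φ(t)` and `t ↦ φ(-t)` are
non-increasing on `[0,∞)`. -/
def PositivelyDecreasing (φ : ℝ → ℝ) : Prop :=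
  (∀ s t : ℝ, 0 ≤ s → s ≤ t → φ t ≤ φ s) ∧ (∀ s t : ℝ, 0 ≤ s → s ≤ t → φ (-t) ≤ φ (-s))

/-- A set `A ⊆ ℝⁿ` is weakly unconditional. -/
def WeaklyUnconditional {n : ℕ} (A : Set (Fin n → ℝ)) : Prop :=
  ∀ x ∈ A, ∀ ε : Fin n → ℝ, (∀ i, ε i = 0 ∨ ε i = 1) → (fun i => ε i * x i) ∈ A

/-- A nonnegative function on a real vector space is `p`-concave. -/
def PConcaveFn {E : Type*} [AddCommGroup E] [Module ℝ E] (p : EReal) (φ : E → ℝ) : Prop :=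
  ∀ x y : E, ∀ lam : ℝ, lam ∈ Ioo (0:ℝ) 1 →
    MpR p lam (φ x) (φ y) ≤ φ ((1 - lam) • x + lam • y)

/-- A function on a real vector space is radially decreasing. -/
def RadiallyDecreasing {E : Type*} [AddCommGroup E] [Module ℝ E] (φ : E → ℝ) : Prop :=
  ∀ x : E, ∀ t : ℝ, t ∈ Icc (0:ℝ) 1 → φ x ≤ φ (t • x)


lemma vol_affine (r c : ℝ) (hr : 0 < r) (K : Set ℝ) :
    volume ((fun x => r * x + c) '' K) = ENNReal.ofReal r * volume K := by
  have : (fun x => r * x + c) '' K = (fun x => x + c) '' (r • K) := by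
    rw [← Set.image_smul, Set.image_image]; rfl
  rw [this, Set.image_add_right, measure_preimage_add_right, Measure.addHaar_smul]
  simp [abs_of_pos hr]

lemma bm1_compact (lam : ℝ) (hlam : lam ∈ Ioo (0:ℝ) 1) (K L H : Set ℝ)
    (hK : IsCompact K) (hL : IsCompact L) (hKn : K.Nonempty) (hLn : L.Nonempty)
    (h : ∀ x ∈ K, ∀ y ∈ L, (1 - lam) * x + lam * y ∈ H) :
    ENNReal.ofReal (1 - lam) * volume K + ENNReal.ofReal lam * volume L ≤ volume H := by
  obtain ⟨M, hMK, hM⟩ := hK.exists_isGreatest hKn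
  obtain ⟨l, hlL, hl⟩ := hL.exists_isLeast hLn
  have h1 : 0 < 1 - lam := by linarith [hlam.2]
  rw [← vol_affine (1 - lam) (lam * l) h1 K, ← vol_affine lam ((1 - lam) * M) hlam.1 L]
  rw [← measure_union₀]
  · apply measure_mono
    rintro z (⟨x, hx, rfl⟩ | ⟨y, hy, rfl⟩)
    · exact h x hx l hlL
    · have := h M hMK y hy
      simpa [add_comm] using this
  · exact ((hL.image (by fun_prop)).measurableSet).nullMeasurableSet
  · refine measure_mono_null (t := {(1 - lam) * M + lam * l}) ?_ (by simp)
    rintro z ⟨⟨x, hx, rfl⟩, ⟨y, hy, hxy⟩⟩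
    have hx' := hM hx
    have hy' := hl hy
    simp only [mem_singleton_iff] at hxy ⊢
    nlinarith [hlam.1, mul_le_mul_of_nonneg_left hx' h1.le, mul_le_mul_of_nonneg_left hy' hlam.1.le]

lemma iSup_compact (F : Set ℝ) (hF : MeasurableSet F) :
    volume F = ⨆ K : {K : Set ℝ // K ⊆ F ∧ IsCompact K}, volume (K : Set ℝ) := by
  apply le_antisymm
  · rw [hF.measure_eq_iSup_isCompact]
    refine iSup_le fun K => iSup_le fun h1 => iSup_le fun h2 => ?_
    exact le_iSup (fun K : {K : Set ℝ // K ⊆ F ∧ IsCompact K} => volume (K : Set ℝ)) ⟨K, h1, h2⟩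
  · exact iSup_le fun K => measure_mono K.2.1

lemma bm1 (lam : ℝ) (hlam : lam ∈ Ioo (0:ℝ) 1) (F G H : Set ℝ)
    (hF : MeasurableSet F) (hG : MeasurableSet G) (hFn : F.Nonempty) (hGn : G.Nonempty)
    (h : ∀ x ∈ F, ∀ y ∈ G, (1 - lam) * x + lam * y ∈ H) :
    ENNReal.ofReal (1 - lam) * volume F + ENNReal.ofReal lam * volume G ≤ volume H := by
  obtain ⟨x0, hx0⟩ := hFn
  obtain ⟨y0, hy0⟩ := hGn
  haveI : ∀ F : Set ℝ, Nonempty {K : Set ℝ // K ⊆ F ∧ IsCompact K} :=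
    fun F => ⟨⟨∅, empty_subset _, isCompact_empty⟩⟩
  rw [iSup_compact F hF, iSup_compact G hG, ENNReal.mul_iSup, ENNReal.mul_iSup, ENNReal.iSup_add]
  refine iSup_le fun K => ?_
  rw [ENNReal.add_iSup]
  refine iSup_le fun L => ?_
  refine le_trans ?_ (bm1_compact lam hlam (insert x0 K.1) (insert y0 L.1) H (K.2.2.insert _)
    (L.2.2.insert _) (insert_nonempty _ _) (insert_nonempty _ _) ?_)
  · gcongr <;> exact subset_insert _ _
  · intro x hx y hy
    exact h x (insert_subset hx0 K.2.1 hx) y (insert_subset hy0 L.2.1 hy)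

lemma vol_lt (a : ℝ≥0∞) : volume (Ioi (0:ℝ) ∩ {t | ENNReal.ofReal t < a}) = a := by
  by_cases ha : a = ⊤
  · subst ha
    have : Ioi (0:ℝ) ∩ {t | ENNReal.ofReal t < ⊤} = Ioi 0 := by
      ext t; simp
    rw [this]; simp
  · have : Ioi (0:ℝ) ∩ {t | ENNReal.ofReal t < a} = Ioo 0 a.toReal := by
      ext t
      simp only [mem_inter_iff, mem_Ioi, mem_setOf_eq, mem_Ioo]
      refine and_congr_right fun ht => ?_
      rw [ENNReal.ofReal_lt_iff_lt_toReal ht.le ha]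
    rw [this, Real.volume_Ioo, sub_zero, ENNReal.ofReal_toReal ha]

lemma layer (f : ℝ → ℝ≥0∞) (hf : Measurable f) :
    ∫⁻ x, f x = ∫⁻ t in Ioi (0:ℝ), volume {x | ENNReal.ofReal t < f x} := by
  have hm : MeasurableSet {p : ℝ × ℝ | ENNReal.ofReal p.2 < f p.1} :=
    measurableSet_lt (by fun_prop) (by fun_prop)
  have h1 := Measure.prod_apply (μ := (volume : Measure ℝ)) (ν := volume.restrict (Ioi (0:ℝ))) hm
  have h2 := Measure.prod_apply_symm (μ := (volume : Measure ℝ))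
    (ν := volume.restrict (Ioi (0:ℝ))) hm
  rw [h1] at h2
  rw [show (∫⁻ t in Ioi (0:ℝ), volume {x | ENNReal.ofReal t < f x}) = _ from h2.symm]
  refine lintegral_congr fun x => ?_
  rw [Measure.restrict_apply (measurable_prodMk_left hm), inter_comm]
  exact (vol_lt (f x)).symm

lemma lin1 (lam : ℝ) (hlam : lam ∈ Ioo (0:ℝ) 1) (f g h : ℝ → ℝ≥0∞)
    (hf : Measurable f) (hg : Measurable g) (hh : Measurable h)
    (hfgh : ∀ x y, min (f x) (g y) ≤ h ((1 - lam) * x + lam * y))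
    (hsup : ⨆ x, f x = ⨆ x, g x) :
    ENNReal.ofReal (1 - lam) * (∫⁻ x, f x) + ENNReal.ofReal lam * (∫⁻ x, g x) ≤ ∫⁻ x, h x := by
  rw [layer f hf, layer g hg, layer h hh, ← lintegral_const_mul', ← lintegral_const_mul',
    ← lintegral_add_left']
  · refine lintegral_mono fun t => ?_
    by_cases ht : ENNReal.ofReal t < ⨆ x, f x
    · have ht' := ht
      rw [hsup] at ht'
      obtain ⟨x0, hx0⟩ := lt_iSup_iff.1 ht
      obtain ⟨y0, hy0⟩ := lt_iSup_iff.1 ht'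
      exact bm1 lam hlam _ _ _ (measurableSet_lt measurable_const hf)
        (measurableSet_lt measurable_const hg) ⟨x0, hx0⟩ ⟨y0, hy0⟩
        fun x hx y hy => (lt_min hx hy).trans_le (hfgh x y)
    · have h1 : {x | ENNReal.ofReal t < f x} = ∅ := by
        ext x; simp only [mem_setOf_eq, mem_empty_iff_false, iff_false]
        exact fun hx => ht (lt_iSup_iff.2 ⟨x, hx⟩)
      have h2 : {x | ENNReal.ofReal t < g x} = ∅ := by
        ext x; simp only [mem_setOf_eq, mem_empty_iff_false, iff_false]
        exact fun hx => ht (hsup ▸ lt_iSup_iff.2 ⟨x, hx⟩)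
      simp [h1, h2]
  · refine Measurable.aemeasurable (Measurable.const_mul ?_ _)
    have hm : MeasurableSet {p : ℝ × ℝ | ENNReal.ofReal p.1 < f p.2} :=
      measurableSet_lt (by fun_prop) (by fun_prop)
    exact measurable_measure_prodMk_left hm
  · simp
  · simp

/-- Mean of order `-1/k` (`min` if `k = 0`). -/
def NN (lam : ℝ) (k : ℕ) (a b : ℝ≥0∞) : ℝ≥0∞ :=
  if k = 0 then min a b
  else (ENNReal.ofReal (1 - lam) * a ^ (-(1 / (k:ℝ))) + ENNReal.ofReal lam * b ^ (-(1 / (k:ℝ)))) ^ (-(k:ℝ))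

lemma NN_ofReal (lam : ℝ) (hlam : lam ∈ Ioo (0:ℝ) 1) (k : ℕ) (hk : k ≠ 0) (a b : ℝ)
    (ha : 0 < a) (hb : 0 < b) : NN lam k (ENNReal.ofReal a) (ENNReal.ofReal b) =
    ENNReal.ofReal (((1 - lam) * a ^ (-(1 / (k:ℝ))) + lam * b ^ (-(1 / (k:ℝ)))) ^ (-(k:ℝ))) := by
  have h1 : 0 < 1 - lam := by linarith [hlam.2]
  have h2 := hlam.1
  rw [NN, if_neg hk, ENNReal.ofReal_rpow_of_pos ha, ENNReal.ofReal_rpow_of_pos hb,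
    ← ENNReal.ofReal_mul h1.le, ← ENNReal.ofReal_mul h2.le,
    ← ENNReal.ofReal_add (by positivity) (by positivity), ENNReal.ofReal_rpow_of_pos (by positivity)]

lemma NN_mono (lam : ℝ) (k : ℕ) {a b a' b' : ℝ≥0∞} (h : a ≤ a') (h' : b ≤ b') :
    NN lam k a b ≤ NN lam k a' b' := by
  unfold NN
  split_ifs with hk
  · exact min_le_min h h'
  · simp only [ENNReal.rpow_neg]
    gcongr

lemma NN_zero_left (lam : ℝ) (hlam : lam ∈ Ioo (0:ℝ) 1) (k : ℕ) (b : ℝ≥0∞) : NN lam k 0 b = 0 := by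
  have h1 : 0 < 1 - lam := by linarith [hlam.2]
  unfold NN
  split_ifs with hk
  · simp
  · have : 0 < (k:ℝ) := by positivity
    rw [ENNReal.zero_rpow_of_neg (by simpa using this), ENNReal.mul_top (by simpa using h1), top_add,
      ENNReal.top_rpow_of_neg (by simpa using this)]

lemma NN_zero_right (lam : ℝ) (hlam : lam ∈ Ioo (0:ℝ) 1) (k : ℕ) (b : ℝ≥0∞) : NN lam k b 0 = 0 := by
  have h1 := hlam.1
  unfold NN
  split_ifs with hk
  · simp
  · have : 0 < (k:ℝ) := by positivity
    rw [ENNReal.zero_rpow_of_neg (by simpa using this), ENNReal.mul_top (by simpa using h1), add_top,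
      ENNReal.top_rpow_of_neg (by simpa using this)]

lemma NN_tendsto (lam : ℝ) (k : ℕ) {u v : ℕ → ℝ≥0∞} {a b : ℝ≥0∞} (hu : Tendsto u atTop (𝓝 a))
    (hv : Tendsto v atTop (𝓝 b)) : Tendsto (fun n => NN lam k (u n) (v n)) atTop (𝓝 (NN lam k a b)) := by
  unfold NN
  split_ifs with hk
  · exact hu.min hv
  · have A : Tendsto (fun n => ENNReal.ofReal (1 - lam) * u n ^ (-(1 / (k:ℝ)))) atTop
        (𝓝 (ENNReal.ofReal (1 - lam) * a ^ (-(1 / (k:ℝ))))) :=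
      ((ENNReal.continuous_const_mul ENNReal.ofReal_ne_top).tendsto _).comp
        ((ENNReal.continuous_rpow_const.tendsto _).comp hu)
    have B : Tendsto (fun n => ENNReal.ofReal lam * v n ^ (-(1 / (k:ℝ)))) atTop
        (𝓝 (ENNReal.ofReal lam * b ^ (-(1 / (k:ℝ))))) :=
      ((ENNReal.continuous_const_mul ENNReal.ofReal_ne_top).tendsto _).comp
        ((ENNReal.continuous_rpow_const.tendsto _).comp hv)
    exact (ENNReal.continuous_rpow_const.tendsto _).comp (A.add B)

/-- Positive homogeneity. -/
lemma NN_mul (lam : ℝ) (hlam : lam ∈ Ioo (0:ℝ) 1) (k : ℕ) (s a b : ℝ) (hs : 0 < s) (ha : 0 < a) (hb : 0 < b) :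
    NN lam k (ENNReal.ofReal (s * a)) (ENNReal.ofReal (s * b)) =
      ENNReal.ofReal s * NN lam k (ENNReal.ofReal a) (ENNReal.ofReal b) := by
  have h1 : 0 < 1 - lam := by linarith [hlam.2]
  have h2 := hlam.1
  by_cases hk : k = 0
  · subst hk
    simp only [NN, if_true]
    rw [ENNReal.ofReal_mul hs.le, ENNReal.ofReal_mul hs.le]
    exact (mul_min _ _ _).symm
  · have hk' : (k:ℝ) ≠ 0 := by exact_mod_cast hk
    rw [NN_ofReal lam hlam k hk _ _ (by positivity) (by positivity), NN_ofReal lam hlam k hk _ _ ha hb,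
      ← ENNReal.ofReal_mul hs.le]
    congr 1
    rw [Real.mul_rpow hs.le ha.le, Real.mul_rpow hs.le hb.le]
    have : (1 - lam) * (s ^ (-(1 / (k:ℝ))) * a ^ (-(1 / (k:ℝ)))) + lam * (s ^ (-(1 / (k:ℝ))) * b ^ (-(1 / (k:ℝ))))
      = s ^ (-(1 / (k:ℝ))) * ((1 - lam) * a ^ (-(1 / (k:ℝ))) + lam * b ^ (-(1 / (k:ℝ)))) := by ring
    rw [this, Real.mul_rpow (by positivity) (by positivity), ← Real.rpow_mul hs.le]
    have : -(1 / (k:ℝ)) * -(k:ℝ) = 1 := by field_simp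
    rw [this, Real.rpow_one]

lemma holder_real (w v K a b c d : ℝ) (hw : 0 < w) (hv : 0 < v) (hK : 1 < K) (ha : 0 < a) (hb : 0 < b)
    (hc : 0 < c) (hd : 0 < d) :
    (w * (a * c) ^ (-(1 / (K - 1))) + v * (b * d) ^ (-(1 / (K - 1)))) ^ (-(K - 1)) ≤
      (w * a ^ (-(1 / K)) + v * b ^ (-(1 / K))) ^ (-K) * (w * c + v * d) := by
  have hK0 : 0 < K := by linarith
  have hK1 : 0 < K - 1 := by linarith
  have hconj : K.HolderConjugate (K / (K - 1)) := Real.HolderConjugate.conjExponent hK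
  have key := Real.inner_le_Lp_mul_Lq_of_nonneg (Finset.univ : Finset (Fin 2))
    (f := ![(w * c) ^ (1 / K), (v * d) ^ (1 / K)])
    (g := ![w ^ ((K - 1) / K) * (a * c) ^ (-(1 / K)), v ^ ((K - 1) / K) * (b * d) ^ (-(1 / K))]) hconj
    (by intro i _; fin_cases i <;> simp <;> positivity) (by intro i _; fin_cases i <;> simp <;> positivity)
  simp only [Fin.sum_univ_two, Matrix.cons_val_zero, Matrix.cons_val_one] at key
  have e1 : ∀ w a c : ℝ, 0 < w → 0 < a → 0 < c →
      (w * c) ^ (1 / K) * (w ^ ((K - 1) / K) * (a * c) ^ (-(1 / K))) = w * a ^ (-(1 / K)) := by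
    intro w a c hw ha hc
    rw [Real.mul_rpow hw.le hc.le, Real.mul_rpow ha.le hc.le]
    have : w ^ (1 / K) * w ^ ((K - 1) / K) = w := by
      rw [← Real.rpow_add hw, ← add_div]; simp [hK0.ne']
    have h' : c ^ (1 / K) * c ^ (-(1 / K)) = 1 := by
      rw [← Real.rpow_add hc]; simp
    calc _ = (w ^ (1 / K) * w ^ ((K - 1) / K)) * a ^ (-(1 / K)) * (c ^ (1 / K) * c ^ (-(1 / K))) := by ring
      _ = _ := by rw [this, h']; ring
  have e2 : ∀ w c : ℝ, 0 < w → 0 < c → ((w * c) ^ (1 / K)) ^ K = w * c := by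
    intro w c hw hc
    rw [← Real.rpow_mul (by positivity)]; simp [hK0.ne']
  have e3 : ∀ w a c : ℝ, 0 < w → 0 < a → 0 < c →
      (w ^ ((K - 1) / K) * (a * c) ^ (-(1 / K))) ^ (K / (K - 1)) = w * (a * c) ^ (-(1 / (K - 1))) := by
    intro w a c hw ha hc
    rw [Real.mul_rpow (by positivity) (by positivity), ← Real.rpow_mul hw.le,
      ← Real.rpow_mul (by positivity)]
    congr 1
    · have : (K - 1) / K * (K / (K - 1)) = 1 := by field_simp
      rw [this, Real.rpow_one]
    · congr 1; field_simp
  rw [e1 w a c hw ha hc, e1 v b d hv hb hd, e2 w c hw hc, e2 v d hv hd, e3 w a c hw ha hc,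
    e3 v b d hv hb hd] at key
  set X := w * a ^ (-(1 / K)) + v * b ^ (-(1 / K)) with hX
  set Y := w * (a * c) ^ (-(1 / (K - 1))) + v * (b * d) ^ (-(1 / (K - 1))) with hY
  set Z := w * c + v * d with hZ
  have hXp : 0 < X := by positivity
  have hYp : 0 < Y := by positivity
  have hZp : 0 < Z := by positivity
  have k2 := Real.rpow_le_rpow hXp.le key hK0.le
  rw [Real.mul_rpow (by positivity) (by positivity), ← Real.rpow_mul hZp.le, ← Real.rpow_mul hYp.le] at k2
  have q1 : 1 / K * K = 1 := by field_simp
  have q2 : 1 / (K / (K - 1)) * K = K - 1 := by field_simp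
  rw [q1, q2, Real.rpow_one] at k2
  rw [Real.rpow_neg hYp.le, Real.rpow_neg hXp.le, inv_mul_eq_div, inv_eq_one_div,
    div_le_div_iff₀ (by positivity) (by positivity), one_mul]
  exact k2

lemma NN_holder (lam : ℝ) (hlam : lam ∈ Ioo (0:ℝ) 1) (k : ℕ) (a b : ℝ) (ha : 0 < a) (hb : 0 < b)
    (c d : ℝ≥0∞) : NN lam k (ENNReal.ofReal a * c) (ENNReal.ofReal b * d) ≤
      NN lam (k + 1) (ENNReal.ofReal a) (ENNReal.ofReal b) *
        (ENNReal.ofReal (1 - lam) * c + ENNReal.ofReal lam * d) := by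
  have h1 : 0 < 1 - lam := by linarith [hlam.2]
  have h2 := hlam.1
  by_cases hc0 : c = 0
  · simp [hc0, NN_zero_left lam hlam]
  by_cases hd0 : d = 0
  · simp [hd0, NN_zero_right lam hlam]
  rw [NN_ofReal lam hlam (k + 1) (by simp) a b ha hb]
  have hpos : 0 < ((1 - lam) * a ^ (-(1 / ((k + 1 : ℕ):ℝ))) + lam * b ^ (-(1 / ((k + 1 : ℕ):ℝ)))) ^ (-((k + 1 : ℕ):ℝ)) := by
    positivity
  by_cases hct : c = ⊤
  · rw [hct, ENNReal.mul_top (a := ENNReal.ofReal (1 - lam)) (by simpa using hlam.2), top_add, ENNReal.mul_top (a := ENNReal.ofReal (_ ^ _)) (ENNReal.ofReal_pos.2 hpos).ne']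
    exact le_top
  by_cases hdt : d = ⊤
  · rw [hdt, ENNReal.mul_top (a := ENNReal.ofReal lam) (by simpa using h2), add_top, ENNReal.mul_top (a := ENNReal.ofReal (_ ^ _)) (ENNReal.ofReal_pos.2 hpos).ne']
    exact le_top
  obtain ⟨c, hc, rfl⟩ : ∃ c' : ℝ, 0 < c' ∧ c = ENNReal.ofReal c' :=
    ⟨c.toReal, ENNReal.toReal_pos hc0 hct, (ENNReal.ofReal_toReal hct).symm⟩
  obtain ⟨d, hd, rfl⟩ : ∃ c' : ℝ, 0 < c' ∧ d = ENNReal.ofReal c' :=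
    ⟨d.toReal, ENNReal.toReal_pos hd0 hdt, (ENNReal.ofReal_toReal hdt).symm⟩
  rw [← ENNReal.ofReal_mul h1.le, ← ENNReal.ofReal_mul h2.le, ← ENNReal.ofReal_mul ha.le,
    ← ENNReal.ofReal_mul hb.le, ← ENNReal.ofReal_add (by positivity) (by positivity),
    ← ENNReal.ofReal_mul hpos.le]
  by_cases hk : k = 0
  · subst hk
    simp only [NN, if_true]
    rw [← ENNReal.ofReal_min]
    apply ENNReal.ofReal_le_ofReal
    simp only [zero_add, Nat.cast_one, div_one, Real.rpow_neg_one]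
    rw [inv_mul_eq_div, le_div_iff₀ (by positivity)]
    have e1 : min (a * c) (b * d) * a⁻¹ ≤ c := by
      rw [← div_eq_mul_inv, div_le_iff₀ ha]; linarith [min_le_left (a * c) (b * d)]
    have e2 : min (a * c) (b * d) * b⁻¹ ≤ d := by
      rw [← div_eq_mul_inv, div_le_iff₀ hb]; linarith [min_le_right (a * c) (b * d)]
    nlinarith [mul_le_mul_of_nonneg_left e1 h1.le, mul_le_mul_of_nonneg_left e2 h2.le]
  · rw [NN_ofReal lam hlam k hk _ _ (by positivity) (by positivity)]
    apply ENNReal.ofReal_le_ofReal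
    have hk' : (0:ℝ) < k := by positivity
    have := holder_real (1 - lam) lam ((k + 1 : ℕ):ℝ) a b c d h1 h2 (by push_cast; linarith) ha hb hc hd
    have e : ((k + 1 : ℕ):ℝ) - 1 = k := by push_cast; ring
    rw [e] at this
    exact this

lemma bbl1_bdd (lam : ℝ) (hlam : lam ∈ Ioo (0:ℝ) 1) (k : ℕ) (f g h : ℝ → ℝ≥0∞)
    (hf : Measurable f) (hg : Measurable g) (hh : Measurable h)
    (hfgh : ∀ x y, NN lam (k + 1) (f x) (g y) ≤ h ((1 - lam) * x + lam * y))
    (hfb : ⨆ x, f x ≠ ⊤) (hgb : ⨆ x, g x ≠ ⊤) :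
    NN lam k (∫⁻ x, f x) (∫⁻ x, g x) ≤ ∫⁻ x, h x := by
  by_cases hf0 : ⨆ x, f x = 0
  · have : ∀ x, f x = 0 := by simpa using hf0
    simp [this, NN_zero_left lam hlam]
  by_cases hg0 : ⨆ x, g x = 0
  · have : ∀ x, g x = 0 := by simpa using hg0
    simp [this, NN_zero_right lam hlam]
  obtain ⟨a, ha, hae⟩ : ∃ c' : ℝ, 0 < c' ∧ ⨆ x, f x = ENNReal.ofReal c' :=
    ⟨_, ENNReal.toReal_pos hf0 hfb, (ENNReal.ofReal_toReal hfb).symm⟩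
  obtain ⟨b, hb, hbe⟩ : ∃ c' : ℝ, 0 < c' ∧ ⨆ x, g x = ENNReal.ofReal c' :=
    ⟨_, ENNReal.toReal_pos hg0 hgb, (ENNReal.ofReal_toReal hgb).symm⟩
  have h1 : 0 < 1 - lam := by linarith [hlam.2]
  have h2 := hlam.1
  have hN := NN_ofReal lam hlam (k + 1) (by simp) a b ha hb
  have hpos : 0 < ((1 - lam) * a ^ (-(1 / ((k + 1 : ℕ):ℝ))) + lam * b ^ (-(1 / ((k + 1 : ℕ):ℝ)))) ^ (-((k + 1 : ℕ):ℝ)) := by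
    positivity
  set N := NN lam (k + 1) (ENNReal.ofReal a) (ENNReal.ofReal b) with hNdef
  have hN0 : N ≠ 0 := by rw [hN]; simpa using hpos
  have hNt : N ≠ ⊤ := by rw [hN]; simp
  have ha0 : ENNReal.ofReal a ≠ 0 := by simpa using ha
  have hb0 : ENNReal.ofReal b ≠ 0 := by simpa using hb
  have hat : ENNReal.ofReal a ≠ ⊤ := ENNReal.ofReal_ne_top
  have hbt : ENNReal.ofReal b ≠ ⊤ := ENNReal.ofReal_ne_top
  have L := lin1 lam hlam (fun x => (ENNReal.ofReal a)⁻¹ * f x) (fun x => (ENNReal.ofReal b)⁻¹ * g x)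
    (fun x => N⁻¹ * h x) (hf.const_mul _) (hg.const_mul _) (hh.const_mul _) ?_ ?_
  · rw [lintegral_const_mul _ hf, lintegral_const_mul _ hg, lintegral_const_mul _ hh] at L
    have H := NN_holder lam hlam k a b ha hb ((ENNReal.ofReal a)⁻¹ * ∫⁻ x, f x)
      ((ENNReal.ofReal b)⁻¹ * ∫⁻ x, g x)
    rw [← mul_assoc, ← mul_assoc, ENNReal.mul_inv_cancel ha0 hat, ENNReal.mul_inv_cancel hb0 hbt,
      one_mul, one_mul] at H
    refine H.trans ((mul_le_mul_right L _).trans ?_)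
    rw [← mul_assoc, ENNReal.mul_inv_cancel hN0 hNt, one_mul]
  · intro x y
    set s := min ((ENNReal.ofReal a)⁻¹ * f x) ((ENNReal.ofReal b)⁻¹ * g y) with hs
    by_cases hs0 : s = 0
    · simp [hs0]
    have hfx : f x ≠ ⊤ := ne_top_of_le_ne_top hfb (le_iSup f x)
    have hst : s ≠ ⊤ := ne_top_of_le_ne_top
      (ENNReal.mul_ne_top (ENNReal.inv_ne_top.2 ha0) hfx) (min_le_left _ _)
    obtain ⟨r, hr, hre⟩ : ∃ c' : ℝ, 0 < c' ∧ s = ENNReal.ofReal c' :=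
      ⟨_, ENNReal.toReal_pos hs0 hst, (ENNReal.ofReal_toReal hst).symm⟩
    have hA : ENNReal.ofReal (r * a) ≤ f x := by
      rw [ENNReal.ofReal_mul hr.le, ← hre]
      calc s * ENNReal.ofReal a ≤ ((ENNReal.ofReal a)⁻¹ * f x) * ENNReal.ofReal a := by
            gcongr; exact min_le_left _ _
        _ = (ENNReal.ofReal a * (ENNReal.ofReal a)⁻¹) * f x := by ring
        _ = f x := by rw [ENNReal.mul_inv_cancel ha0 hat, one_mul]
    have hB : ENNReal.ofReal (r * b) ≤ g y := by
      rw [ENNReal.ofReal_mul hr.le, ← hre]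
      calc s * ENNReal.ofReal b ≤ ((ENNReal.ofReal b)⁻¹ * g y) * ENNReal.ofReal b := by
            gcongr; exact min_le_right _ _
        _ = (ENNReal.ofReal b * (ENNReal.ofReal b)⁻¹) * g y := by ring
        _ = g y := by rw [ENNReal.mul_inv_cancel hb0 hbt, one_mul]
    have hC := (NN_mono lam (k + 1) hA hB).trans (hfgh x y)
    rw [NN_mul lam hlam (k + 1) r a b hr ha hb, ← hNdef, ← hre] at hC
    calc s = N⁻¹ * (s * N) := by
          rw [mul_comm s, ← mul_assoc, ENNReal.inv_mul_cancel hN0 hNt, one_mul]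
      _ ≤ _ := by gcongr
  · rw [← ENNReal.mul_iSup, ← ENNReal.mul_iSup, hae, hbe, ENNReal.inv_mul_cancel ha0 hat,
      ENNReal.inv_mul_cancel hb0 hbt]

lemma trunc_tendsto (f : ℝ → ℝ≥0∞) (hf : Measurable f) :
    Tendsto (fun n : ℕ => ∫⁻ x, min (f x) n) atTop (𝓝 (∫⁻ x, f x)) := by
  apply lintegral_tendsto_of_tendsto_of_monotone
  · intro n; exact (hf.min measurable_const).aemeasurable
  · refine ae_of_all _ fun x n m hnm => ?_
    exact min_le_min le_rfl (by exact_mod_cast hnm)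
  · refine ae_of_all _ fun x => ?_
    have := (tendsto_const_nhds (x := f x)).min ENNReal.tendsto_nat_nhds_top
    simpa using this

lemma bbl1 (lam : ℝ) (hlam : lam ∈ Ioo (0:ℝ) 1) (k : ℕ) (f g h : ℝ → ℝ≥0∞)
    (hf : Measurable f) (hg : Measurable g) (hh : Measurable h)
    (hfgh : ∀ x y, NN lam (k + 1) (f x) (g y) ≤ h ((1 - lam) * x + lam * y)) :
    NN lam k (∫⁻ x, f x) (∫⁻ x, g x) ≤ ∫⁻ x, h x := by
  refine le_of_tendsto' (NN_tendsto lam k (trunc_tendsto f hf) (trunc_tendsto g hg)) fun n => ?_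
  apply bbl1_bdd lam hlam k _ _ h (hf.min measurable_const) (hg.min measurable_const) hh
  · intro x y
    exact (NN_mono lam (k + 1) (min_le_left _ _) (min_le_left _ _)).trans (hfgh x y)
  · exact ne_top_of_le_ne_top (ENNReal.natCast_ne_top n) (iSup_le fun x => min_le_right _ _)
  · exact ne_top_of_le_ne_top (ENNReal.natCast_ne_top n) (iSup_le fun x => min_le_right _ _)

lemma lint_succ (m : ℕ) (f : (Fin (m + 1) → ℝ) → ℝ≥0∞) (hf : Measurable f) :
    ∫⁻ x, f x = ∫⁻ t : ℝ, ∫⁻ y : Fin m → ℝ, f (Fin.cons t y) := by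
  have h := (volume_preserving_piFinSuccAbove (fun _ : Fin (m + 1) => ℝ) 0).symm.lintegral_comp hf
  rw [← h, Measure.volume_eq_prod, lintegral_prod]
  · refine lintegral_congr fun t => lintegral_congr fun y => ?_
    congr 1
    ext i
    refine Fin.cases ?_ (fun j => ?_) i <;> simp [MeasurableEquiv.piFinSuccAbove, Fin.insertNthEquiv]
  · exact (hf.comp (MeasurableEquiv.measurable _)).aemeasurable

lemma meas_cons (m : ℕ) : Measurable (fun p : ℝ × (Fin m → ℝ) => (Fin.cons p.1 p.2 : Fin (m + 1) → ℝ)) := by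
  rw [measurable_pi_iff]
  intro i
  refine Fin.cases ?_ (fun j => ?_) i
  · simpa using measurable_fst
  · simp only [Fin.cons_succ]; fun_prop

lemma bbl (lam : ℝ) (hlam : lam ∈ Ioo (0:ℝ) 1) (m : ℕ) : ∀ (k : ℕ) (f g h : (Fin m → ℝ) → ℝ≥0∞),
    Measurable f → Measurable g → Measurable h →
    (∀ x y, NN lam (k + m) (f x) (g y) ≤ h ((1 - lam) • x + lam • y)) →
    NN lam k (∫⁻ x, f x) (∫⁻ x, g x) ≤ ∫⁻ x, h x := by
  induction m with
  | zero =>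
    intro k f g h hf hg hh hfgh
    have := hfgh default default
    rw [lintegral_unique, lintegral_unique, lintegral_unique]
    have e : (volume : Measure (Fin 0 → ℝ)) univ = 1 := by rw [volume_pi, Measure.pi_univ]; simp
    rw [e, mul_one, mul_one, mul_one]
    rw [show (1 - lam) • (default : Fin 0 → ℝ) + lam • default = default from Subsingleton.elim _ _, add_zero] at this
    have ed : (@default (Fin 0 → ℝ) Unique.instInhabited) = default := Subsingleton.elim _ _
    rw [ed]
    convert this
  | succ m ih =>
    intro k f g h hf hg hh hfgh
    rw [lint_succ m f hf, lint_succ m g hg, lint_succ m h hh]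
    have hc := meas_cons m
    apply bbl1 lam hlam k
    · exact (hf.comp hc).lintegral_prod_right'
    · exact (hg.comp hc).lintegral_prod_right'
    · exact (hh.comp hc).lintegral_prod_right'
    intro x y
    apply ih (k + 1)
    · exact hf.comp (hc.comp measurable_prodMk_left)
    · exact hg.comp (hc.comp measurable_prodMk_left)
    · exact hh.comp (hc.comp measurable_prodMk_left)
    intro u v
    have := hfgh (Fin.cons x u) (Fin.cons y v)
    rw [show k + 1 + m = k + (m + 1) by ring]
    convert this using 2
    ext i
    refine Fin.cases ?_ (fun j => ?_) i <;> simp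

lemma MpR_ge (lam : ℝ) (hlam : lam ∈ Ioo (0:ℝ) 1) (m : ℕ) (hm : 0 < m) (q : EReal)
    (hq : ((-1/(m:ℝ) : ℝ) : EReal) ≤ q) (a b : ℝ) (ha : 0 < a) (hb : 0 < b) :
    ((1 - lam) * a ^ (-(1 / (m:ℝ))) + lam * b ^ (-(1 / (m:ℝ)))) ^ (-(m:ℝ)) ≤ MpR q lam a b := by
  have h1 : 0 < 1 - lam := by linarith [hlam.2]
  have h2 := hlam.1
  have hm' : (0:ℝ) < m := by exact_mod_cast hm
  have hgm : ((1 - lam) * a ^ (-(1 / (m:ℝ))) + lam * b ^ (-(1 / (m:ℝ)))) ^ (-(m:ℝ)) ≤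
      a ^ (1 - lam) * b ^ lam := by
    have := Real.geom_mean_le_arith_mean2_weighted h1.le h2.le
      (p₁ := a ^ (-(1 / (m:ℝ)))) (p₂ := b ^ (-(1 / (m:ℝ)))) (by positivity) (by positivity) (by ring)
    have := Real.rpow_le_rpow_of_nonpos (by positivity) this (neg_nonpos.2 hm'.le)
    refine this.trans (le_of_eq ?_)
    rw [Real.mul_rpow (by positivity) (by positivity), ← Real.rpow_mul ha.le, ← Real.rpow_mul ha.le,
      ← Real.rpow_mul hb.le, ← Real.rpow_mul hb.le]
    congr 2 <;> field_simp
  unfold MpR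
  rw [if_neg (by simp [ha.ne', hb.ne'])]
  split_ifs with c1 c2 c3
  · refine hgm.trans ?_
    have hx : a ^ (1 - lam) * b ^ lam ≤ (max a b) ^ (1 - lam) * (max a b) ^ lam := by
      gcongr
      · exact le_max_left _ _
      · exact le_max_right _ _
    rw [← Real.rpow_add (by positivity)] at hx
    simpa using hx
  · subst c2
    simp at hq
  · exact hgm
  · lift q to ℝ using ⟨c1, c2⟩
    have hq' : -1/(m:ℝ) ≤ q := by exact_mod_cast hq
    have hq0 : q ≠ 0 := by exact_mod_cast c3
    simp only [EReal.toReal_coe]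
    rcases lt_or_gt_of_ne hq0 with hneg | hpos
    · set s := -(1 / (m:ℝ)) / q with hs
      have hs1 : 1 ≤ s := by
        rw [hs, le_div_iff_of_neg hneg]
        rw [neg_div] at hq'; linarith
      have key := (convexOn_rpow hs1).2 (x := a ^ q) (y := b ^ q) (mem_Ici.2 (by positivity))
        (mem_Ici.2 (by positivity)) h1.le h2.le (by ring)
      simp only [smul_eq_mul] at key
      rw [← Real.rpow_mul ha.le, ← Real.rpow_mul hb.le] at key
      have e : q * s = -(1 / (m:ℝ)) := by rw [hs]; field_simp
      rw [e] at key
      have := Real.rpow_le_rpow_of_nonpos (by positivity) key (neg_nonpos.2 hm'.le)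
      refine this.trans (le_of_eq ?_)
      rw [← Real.rpow_mul (by positivity)]
      congr 1
      rw [hs]; field_simp
    · refine hgm.trans ?_
      have := Real.geom_mean_le_arith_mean2_weighted h1.le h2.le
        (p₁ := a ^ q) (p₂ := b ^ q) (by positivity) (by positivity) (by ring)
      have := Real.rpow_le_rpow (by positivity) this (one_div_pos.2 hpos).le
      refine le_trans (le_of_eq ?_) this
      rw [Real.mul_rpow (by positivity) (by positivity), ← Real.rpow_mul ha.le, ← Real.rpow_mul ha.le,
        ← Real.rpow_mul hb.le, ← Real.rpow_mul hb.le]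
      congr 2 <;> field_simp

lemma borell (lam : ℝ) (hlam : lam ∈ Ioo (0:ℝ) 1) (m : ℕ) (hm : 0 < m)
    (φ₂ : (Fin m → ℝ) → ℝ) (hφ₂0 : ∀ x, 0 ≤ φ₂ x) (hφ₂meas : Measurable φ₂)
    (q : EReal) (hq : ((-1/(m:ℝ) : ℝ) : EReal) ≤ q) (hφ₂conc : PConcaveFn q φ₂)
    (A B C : Set (Fin m → ℝ)) (hA : MeasurableSet A) (hB : MeasurableSet B) (hC : MeasurableSet C)
    (h : ∀ x ∈ A, ∀ y ∈ B, (1 - lam) • x + lam • y ∈ C) :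
    min ((volume.withDensity fun x => ENNReal.ofReal (φ₂ x)) A)
      ((volume.withDensity fun x => ENNReal.ofReal (φ₂ x)) B) ≤
      (volume.withDensity fun x => ENNReal.ofReal (φ₂ x)) C := by
  have hφ : Measurable fun x => ENNReal.ofReal (φ₂ x) := hφ₂meas.ennreal_ofReal
  rw [withDensity_apply _ hA, withDensity_apply _ hB, withDensity_apply _ hC,
    ← lintegral_indicator hA, ← lintegral_indicator hB, ← lintegral_indicator hC]
  have := bbl lam hlam m 0 _ _ _ (hφ.indicator hA) (hφ.indicator hB) (hφ.indicator hC) ?_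
  · simpa [NN] using this
  intro x y
  by_cases hx : x ∈ A
  swap
  · simp [indicator_of_notMem hx, NN_zero_left lam hlam]
  by_cases hy : y ∈ B
  swap
  · simp [indicator_of_notMem hy, NN_zero_right lam hlam]
  rw [indicator_of_mem hx, indicator_of_mem hy, indicator_of_mem (h x hx y hy), zero_add]
  rcases (hφ₂0 x).eq_or_lt with h0 | hxp
  · simp [← h0, NN_zero_left lam hlam]
  rcases (hφ₂0 y).eq_or_lt with h0 | hyp
  · simp [← h0, NN_zero_right lam hlam]
  rw [NN_ofReal lam hlam m hm.ne' _ _ hxp hyp]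
  exact ENNReal.ofReal_le_ofReal ((MpR_ge lam hlam m hm q hq _ _ hxp hyp).trans (hφ₂conc x y lam hlam))

lemma lin_weight (lam : ℝ) (hlam : lam ∈ Ioo (0:ℝ) 1) (φ : ℝ → ℝ) (hφ0 : ∀ x, 0 ≤ φ x)
    (hφ : Measurable φ) (hdec : PositivelyDecreasing φ) (f g h : ℝ → ℝ≥0∞)
    (hf : Measurable f) (hg : Measurable g) (hh : Measurable h)
    (hfgh : ∀ x y, min (f x) (g y) ≤ h ((1 - lam) * x + lam * y))
    (hf0 : ⨆ x, f x = f 0) (hg0 : ⨆ x, g x = g 0) (hfg : f 0 = g 0) :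
    ENNReal.ofReal (1 - lam) * (∫⁻ x, f x ∂(volume.withDensity fun x => ENNReal.ofReal (φ x)))
      + ENNReal.ofReal lam * (∫⁻ x, g x ∂(volume.withDensity fun x => ENNReal.ofReal (φ x)))
      ≤ ∫⁻ x, h x ∂(volume.withDensity fun x => ENNReal.ofReal (φ x)) := by
  have h1 : 0 < 1 - lam := by linarith [hlam.2]
  have h2 := hlam.1
  have hms : ∀ t, MeasurableSet {x | t < φ x} := fun t => measurableSet_lt measurable_const hφ
  have key : ∀ f : ℝ → ℝ≥0∞, Measurable f →
      ∫⁻ x, f x ∂(volume.withDensity fun x => ENNReal.ofReal (φ x)) =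
      ∫⁻ t in Ioi (0:ℝ), ∫⁻ x, {x | t < φ x}.indicator f x := by
    intro f hf
    rw [lintegral_withDensity_eq_lintegral_mul _ hφ.ennreal_ofReal hf, mul_comm,
      ← lintegral_withDensity_eq_lintegral_mul _ hf hφ.ennreal_ofReal,
      lintegral_eq_lintegral_meas_lt _ (ae_of_all _ hφ0) hφ.aemeasurable]
    refine lintegral_congr fun t => ?_
    rw [withDensity_apply _ (hms t), lintegral_indicator (hms t)]
  have hmono : ∀ f : ℝ → ℝ≥0∞, Measurable fun t => ∫⁻ x, {x | t < φ x}.indicator f x := by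
    intro f
    apply Antitone.measurable
    intro s t hst
    refine lintegral_mono fun x => ?_
    exact indicator_le_indicator_of_subset (fun x hx => lt_of_le_of_lt hst hx) (fun _ => zero_le) x
  rw [key f hf, key g hg, key h hh, ← lintegral_const_mul _ (hmono f), ← lintegral_const_mul _ (hmono g),
    ← lintegral_add_left ((hmono f).const_mul _)]
  refine lintegral_mono fun t => ?_
  have hmax : ∀ x, φ x ≤ φ 0 := by
    intro x
    rcases le_total 0 x with hx | hx
    · exact hdec.1 0 x le_rfl hx
    · simpa using hdec.2 0 (-x) le_rfl (by linarith)
  by_cases ht : t < φ 0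
  · apply lin1 lam hlam _ _ _ (hf.indicator (hms t)) (hg.indicator (hms t)) (hh.indicator (hms t))
    · intro x y
      by_cases hx : t < φ x
      swap
      · simp [indicator, hx]
      by_cases hy : t < φ y
      swap
      · simp [indicator, hy]
      have hz : t < φ ((1 - lam) * x + lam * y) := by
        rcases le_total x y with hxy | hxy
        · have l1 : x ≤ (1 - lam) * x + lam * y := by nlinarith
          have l2 : (1 - lam) * x + lam * y ≤ y := by nlinarith
          rcases le_total 0 ((1 - lam) * x + lam * y) with hz | hz
          · exact hy.trans_le (hdec.1 _ _ hz l2)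
          · have := hdec.2 (-((1 - lam) * x + lam * y)) (-x) (by linarith) (by linarith)
            rw [neg_neg, neg_neg] at this
            exact hx.trans_le this
        · have l1 : y ≤ (1 - lam) * x + lam * y := by nlinarith
          have l2 : (1 - lam) * x + lam * y ≤ x := by nlinarith
          rcases le_total 0 ((1 - lam) * x + lam * y) with hz | hz
          · exact hx.trans_le (hdec.1 _ _ hz l2)
          · have := hdec.2 (-((1 - lam) * x + lam * y)) (-y) (by linarith) (by linarith)
            rw [neg_neg, neg_neg] at this
            exact hy.trans_le this
      simpa [indicator, hx, hy, hz] using hfgh x y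
    · have aux : ∀ f : ℝ → ℝ≥0∞, ⨆ x, f x = f 0 → ⨆ x, {x | t < φ x}.indicator f x = f 0 := by
        intro f hf0
        apply le_antisymm
        · rw [← hf0]
          exact iSup_mono fun x => indicator_le_self _ _ x
        · refine le_iSup_of_le 0 ?_
          simp [indicator, ht]
      rw [aux f hf0, aux g hg0, hfg]
  · have : {x | t < φ x} = ∅ := by
      ext x; simp only [mem_setOf_eq, mem_empty_iff_false, iff_false]
      exact fun hx => ht (hx.trans_le (hmax x))
    simp [this]

/-- Theorem `t:BM_lineal_med_1`: linear Brunn–Minkowski inequality on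
`ℝ × ℝ^{n-1}` for the product of a measure with positively decreasing density on `ℝ` and a
measure with `q`-concave density on `ℝ^{n-1}`, when both sets attain their (common) maximal
section at the central section. Here `m = n - 1`. -/
theorem statement14 {m : ℕ} (hm : 0 < m)
    (φ₁ : ℝ → ℝ) (hφ₁0 : ∀ x, 0 ≤ φ₁ x) (hφ₁meas : Measurable φ₁)
    (hφ₁dec : PositivelyDecreasing φ₁)
    (φ₂ : (Fin m → ℝ) → ℝ) (hφ₂0 : ∀ x, 0 ≤ φ₂ x) (hφ₂meas : Measurable φ₂)
    (q : EReal) (hq : ((-1/(m:ℝ) : ℝ) : EReal) ≤ q) (hφ₂conc : PConcaveFn q φ₂)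
    (μ₁ : Measure ℝ) (hμ₁ : μ₁ = (volume : Measure ℝ).withDensity
      fun x => ENNReal.ofReal (φ₁ x))
    (μ₂ : Measure (Fin m → ℝ)) (hμ₂ : μ₂ = (volume : Measure (Fin m → ℝ)).withDensity
      fun x => ENNReal.ofReal (φ₂ x))
    (lam : ℝ) (hlam : lam ∈ Ioo (0:ℝ) 1)
    (A B : Set (ℝ × (Fin m → ℝ))) (hA : A.Nonempty) (hB : B.Nonempty)
    (hAm : MeasurableSet A) (hBm : MeasurableSet B)
    (hCm : MeasurableSet ((1 - lam) • A + lam • B))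
    (hsecA : μ₂ {y | ((0:ℝ), y) ∈ A} = ⨆ x : ℝ, μ₂ {y | (x, y) ∈ A})
    (hsupAB : (⨆ x : ℝ, μ₂ {y | (x, y) ∈ A}) = ⨆ x : ℝ, μ₂ {y | (x, y) ∈ B})
    (hsecB : (⨆ x : ℝ, μ₂ {y | (x, y) ∈ B}) = μ₂ {y | ((0:ℝ), y) ∈ B}) :
    ENNReal.ofReal (1 - lam) * (μ₁.prod μ₂) A + ENNReal.ofReal lam * (μ₁.prod μ₂) B
      ≤ (μ₁.prod μ₂) ((1 - lam) • A + lam • B) := by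
  have hmeas : ∀ S : Set (ℝ × (Fin m → ℝ)), MeasurableSet S → ∀ x : ℝ, MeasurableSet {y | (x, y) ∈ S} :=
    fun S hS x => measurable_prodMk_left hS
  have hsf : SFinite μ₂ := by rw [hμ₂]; infer_instance
  rw [Measure.prod_apply hAm, Measure.prod_apply hBm, Measure.prod_apply hCm, hμ₁]
  apply lin_weight lam hlam φ₁ hφ₁0 hφ₁meas hφ₁dec
  · exact measurable_measure_prodMk_left hAm
  · exact measurable_measure_prodMk_left hBm
  · exact measurable_measure_prodMk_left hCm
  · intro x y
    rw [hμ₂]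
    refine borell lam hlam m hm φ₂ hφ₂0 hφ₂meas q hq hφ₂conc _ _ _ (hmeas A hAm x) (hmeas B hBm y)
      (hmeas _ hCm _) ?_
    intro u hu v hv
    exact Set.add_mem_add (Set.smul_mem_smul_set (a := 1 - lam) (s := A) (b := (x, u)) hu)
      (Set.smul_mem_smul_set (a := lam) (s := B) (b := (y, v)) hv)
  · exact hsecA.symm
  · exact hsecB
  · exact hsecA.trans (hsupAB.trans hsecB)

end
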